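/- Let α > 0 be a non-integer real number and let k_s, d_s, T_i, T_∞, h₀ be positive constants with 0 < h₀ ≤ 2^α Γ(α/2 + 1) k_s T_i d_s^{(α−1)/2} / (T_∞ √π). Define E_s = [ −T_i d_s^{α/2} k_s Γ(α+1) + Γ((α+1)/2) h₀ √(d_s) T_∞ ] / [ k_s Γ(α/2 + 1) + h₀ √(d_s) Γ((α+1)/2) ] and F_s = 2√(d_s) h₀ (E_s − T_∞)/k_s, and set Ψ_s(x,t) = t^{α/2}[ E_s M(−α/2, 1/2, −η_s²) + F_s η_s M(−α/2 + 1/2, 3/2, −η_s²) ] with η_s = x/(2√(d_s t)). Then: (i) ∂Ψ_s/∂t(x,t) = d_s ∂²Ψ_s/∂x²(x,t) for all x > 0, t > 0; (ii) k_s ∂Ψ_s/∂x(0,t) = h₀ t^{−1/2} ( Ψ_s(0,t) − T_∞ t^{α/2} ) for all t > 0; (iii) for every x > 0, lim_{t→0⁺} Ψ_s(x,t) = −T_i x^α. -/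

import Mathlib

noncomputable def poch (a : ℝ) (s : ℕ) : ℝ := ∏ i ∈ Finset.range s, (a + i)

/-- Kummer's confluent hypergeometric function `M(a,b,z)`,
defined by the everywhere-convergent series `M(a,b,z) = Σ_{s} (a)_s z^s / ((b)_s s!)`. -/
noncomputable def kummerM (a b z : ℝ) : ℝ :=
  ∑' s : ℕ, poch a s / (poch b s * (Nat.factorial s)) * z ^ s

/-- Tricomi's confluent hypergeometric function
`U(a,b,z) = (1/Γ(a)) ∫_0^∞ e^{−z t} t^{a−1} (1+t)^{b−a−1} dt`. -/
noncomputable def tricomiU (a b z : ℝ) : ℝ :=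
  (1 / Real.Gamma a) *
    ∫ t in Set.Ioi (0:ℝ), Real.exp (-z * t) * t ^ (a - 1) * (1 + t) ^ (b - a - 1)

/-!
By Kummer's transformation `M(a, b, -r) = e⁻ʳ M(b - a, b, r)`, the number `M(a, b, -r)` is the
expectation of `(b - a)_N / (b)_N` for a Poisson variable `N` of mean `r`. Since `N` concentrates
at `r` and `(b - a)_n / (b)_n ~ Γ(b) / Γ(b - a) * n ^ (-a)` by Euler's product for `Γ`, this
expectation is asymptotic to `Γ(b) / Γ(b - a) * r ^ (-a)`.

Because of the self-similar form of `Ψ_s`, the heat equation is an ordinary differential equation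
in `η`, which follows from the contiguous relations of `M`, and the limit `t → 0⁺` is the limit
`η → ∞`. The asymptotics of `M` thus give the initial value as a multiple of `x ^ α`, and Legendre's
duplication formula identifies the factor as `-T_i`.
-/

open Filter Topology MeasureTheory ProbabilityTheory Asymptotics
open scoped NNReal Nat

section PoissonAsymptotics

variable {u v : ℕ → ℝ} {p L : ℝ}

lemma summable_mul_pow_div_factorial_of_isBigO_rpow
    (hu : u =O[atTop] fun n : ℕ => (n : ℝ) ^ p) (x : ℝ) :
    Summable fun n => u n * (x ^ n / n !) := by
  have hexp : (fun n : ℕ => (n : ℝ) ^ p) =O[atTop] fun n : ℕ => Real.exp 1 ^ n := by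
    simpa only [Function.comp_def, Real.exp_one_pow] using
      (isLittleO_rpow_exp_atTop p).isBigO.comp_tendsto tendsto_natCast_atTop_atTop
  refine summable_of_isBigO_nat (Real.summable_pow_div_factorial (Real.exp 1 * x)) ?_
  simpa only [mul_pow, mul_div_assoc] using
    (hu.trans hexp).mul (isBigO_refl (fun n : ℕ => x ^ n / (n ! : ℝ)) atTop)

lemma integrable_poissonMeasure_of_isBigO_rpow
    (hu : u =O[atTop] fun n : ℕ => (n : ℝ) ^ p) (r : ℝ≥0) : Integrable u (poissonMeasure r) := by
  rw [integrable_poissonMeasure_iff]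
  refine ((summable_mul_pow_div_factorial_of_isBigO_rpow hu.norm_left r).mul_left
    (Real.exp (-r))).congr fun n => ?_
  ring

lemma integrable_pow_poissonMeasure (r : ℝ≥0) (k : ℕ) :
    Integrable (fun n : ℕ => (n : ℝ) ^ k) (poissonMeasure r) := by
  refine integrable_poissonMeasure_of_isBigO_rpow (p := k) ?_ r
  simpa only [Real.rpow_natCast] using isBigO_refl _ _

lemma memLp_two_pow_poissonMeasure (r : ℝ≥0) (k : ℕ) :
    MemLp (fun n : ℕ => (n : ℝ) ^ k) 2 (poissonMeasure r) := by
  refine (memLp_two_iff_integrable_sq .of_discrete).2 ?_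
  simpa only [← pow_mul] using integrable_pow_poissonMeasure r (k * 2)

lemma integral_poissonMeasure_descFactorial_mul (r : ℝ≥0) (k : ℕ) (u : ℕ → ℝ) :
    ∫ n, n.descFactorial k * u (n - k) ∂poissonMeasure r
      = (r : ℝ) ^ k * ∫ n, u n ∂poissonMeasure r := by
  have hsupp : Function.support (fun n : ℕ =>
      (Real.exp (-r) * (r : ℝ) ^ n / n !) • (n.descFactorial k * u (n - k)))
      ⊆ Set.range (· + k) := fun n hn => by
    refine ⟨n - k, Nat.sub_add_cancel (not_lt.1 fun hlt => hn ?_)⟩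
    simp [Nat.descFactorial_eq_zero_iff_lt.2 hlt]
  rw [integral_poissonMeasure, integral_poissonMeasure,
    ← (add_left_injective k).tsum_eq hsupp, ← tsum_mul_left]
  refine tsum_congr fun n => ?_
  have hfact : ((n + k)! : ℝ) = n ! * (n + k).descFactorial k := by
    have := Nat.factorial_mul_descFactorial (Nat.le_add_left k n)
    rw [Nat.add_sub_cancel] at this
    exact_mod_cast this.symm
  have hdesc : ((n + k).descFactorial k : ℝ) ≠ 0 := by
    exact_mod_cast (Nat.descFactorial_pos.2 (Nat.le_add_left k n)).ne'
  simp only [Nat.add_sub_cancel, smul_eq_mul, hfact, pow_add]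
  field_simp

lemma isLittleO_integral_poissonMeasure_of_eventuallyEq_zero (hu : u =ᶠ[atTop] 0) (p : ℝ) :
    (fun r : ℝ≥0 => ∫ n, u n ∂poissonMeasure r) =o[atTop] fun r => (r : ℝ) ^ p := by
  obtain ⟨N, hN⟩ := eventually_atTop.1 hu
  have hterm (n : ℕ) : (fun r : ℝ≥0 => (Real.exp (-r) * (r : ℝ) ^ n / n !) * u n)
      =o[atTop] fun r : ℝ≥0 => (r : ℝ) ^ p := by
    have hexp : (fun x : ℝ => Real.exp (-x) * x ^ n) =o[atTop] fun x => x ^ p := by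
      refine ((isLittleO_exp_neg_mul_rpow_atTop one_pos (p - n)).mul_isBigO
        (isBigO_refl (fun x : ℝ => x ^ n) atTop)).congr' (by simp) ?_
      filter_upwards [eventually_gt_atTop 0] with x hx
      rw [← Real.rpow_natCast x n, ← Real.rpow_add hx, sub_add_cancel]
    refine ((hexp.comp_tendsto (NNReal.tendsto_coe_atTop.2 tendsto_id)).const_mul_left
      (u n / n !)).congr_left fun r => ?_
    simp only [Function.comp_apply, id]
    ring
  refine (IsLittleO.sum (s := Finset.range N) fun n _ => hterm n).congr_left fun r => ?_
  rw [integral_poissonMeasure, Finset.sum_apply]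
  exact (tsum_eq_sum (s := Finset.range N) fun n hn => by simp [hN n (by simpa using hn)]).symm

theorem isLittleO_integral_poissonMeasure (hv : ∀ n, 0 ≤ v n)
    (hvO : v =O[atTop] fun n : ℕ => (n : ℝ) ^ p)
    (hvp : (fun r : ℝ≥0 => ∫ n, v n ∂poissonMeasure r) =O[atTop] fun r => (r : ℝ) ^ p)
    (huv : u =o[atTop] v) :
    (fun r : ℝ≥0 => ∫ n, u n ∂poissonMeasure r) =o[atTop] fun r => (r : ℝ) ^ p := by
  have hvi (r : ℝ≥0) := integrable_poissonMeasure_of_isBigO_rpow hvO r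
  obtain ⟨C, hC, hvC⟩ := hvp.exists_pos
  refine IsLittleO.of_bound fun ε hε => ?_
  obtain ⟨K, hK⟩ := eventually_atTop.1 (huv.def (show 0 < ε / 2 / C by positivity))
  set head : ℕ → ℝ := fun n => if n < K then u n else 0
  set tail : ℕ → ℝ := fun n => if n < K then 0 else u n
  have hhead : head =ᶠ[atTop] 0 := by
    filter_upwards [eventually_ge_atTop K] with n hn
    exact if_neg hn.not_gt
  have htail (n : ℕ) : ‖tail n‖ ≤ ε / 2 / C * v n := by
    by_cases hn : n < K
    · simpa only [tail, if_pos hn, norm_zero] using mul_nonneg (by positivity) (hv n)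
    · simpa only [tail, if_neg hn, Real.norm_of_nonneg (hv n)] using hK n (not_lt.1 hn)
  filter_upwards [(isLittleO_integral_poissonMeasure_of_eventuallyEq_zero hhead p).def
    (half_pos hε), hvC.bound] with r hr hvr
  have htaili : Integrable tail (poissonMeasure r) :=
    ((hvi r).const_mul _).mono' .of_discrete (.of_forall htail)
  have hheadi : Integrable head (poissonMeasure r) :=
    integrable_poissonMeasure_of_isBigO_rpow (p := p) (hhead.trans_isBigO (isBigO_zero _ _)) r
  have hsplit : ∫ n, u n ∂poissonMeasure r
      = ∫ n, head n ∂poissonMeasure r + ∫ n, tail n ∂poissonMeasure r := by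
    rw [← integral_add hheadi htaili]
    exact integral_congr_ae (.of_forall fun n => by by_cases hn : n < K <;> simp [head, tail, hn])
  have htailr : ‖∫ n, tail n ∂poissonMeasure r‖ ≤ ε / 2 * ‖(r : ℝ) ^ p‖ := calc
    _ ≤ ∫ n, ε / 2 / C * v n ∂poissonMeasure r :=
      norm_integral_le_of_norm_le ((hvi r).const_mul _) (.of_forall htail)
    _ ≤ ε / 2 / C * (C * ‖(r : ℝ) ^ p‖) := by
      rw [integral_const_mul]
      gcongr
      exact (Real.le_norm_self _).trans hvr
    _ = ε / 2 * ‖(r : ℝ) ^ p‖ := by field_simp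
  rw [hsplit]
  linarith [norm_add_le (∫ n, head n ∂poissonMeasure r) (∫ n, tail n ∂poissonMeasure r)]

theorem tendsto_integral_poissonMeasure_div_rpow_of_dominant (hv : ∀ n, 0 ≤ v n)
    (hvO : v =O[atTop] fun n : ℕ => (n : ℝ) ^ p)
    (hvp : Tendsto (fun r : ℝ≥0 => (∫ n, v n ∂poissonMeasure r) / (r : ℝ) ^ p) atTop (𝓝 1))
    (huv : (fun n => u n - L * v n) =o[atTop] v) :
    Tendsto (fun r : ℝ≥0 => (∫ n, u n ∂poissonMeasure r) / (r : ℝ) ^ p) atTop (𝓝 L) := by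
  have hvi (r : ℝ≥0) := integrable_poissonMeasure_of_isBigO_rpow hvO r
  have hpos : ∀ᶠ r : ℝ≥0 in atTop, (r : ℝ) ^ p ≠ 0 := by
    filter_upwards [eventually_gt_atTop 0] with r hr
    exact (Real.rpow_pos_of_pos hr p).ne'
  have hO : (fun r : ℝ≥0 => ∫ n, v n ∂poissonMeasure r) =O[atTop] fun r => (r : ℝ) ^ p :=
    isBigO_of_div_tendsto_nhds (hpos.mono fun r hr h => absurd h hr) 1 hvp
  have herr := (isLittleO_integral_poissonMeasure hv hvO hO huv).tendsto_div_nhds_zero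
  have hlim := herr.add (hvp.const_mul L)
  rw [zero_add, mul_one] at hlim
  refine hlim.congr fun r => ?_
  have hui : Integrable (fun n => u n - L * v n) (poissonMeasure r) :=
    integrable_poissonMeasure_of_isBigO_rpow (huv.isBigO.trans hvO) r
  rw [← mul_div_assoc, ← add_div, ← integral_const_mul, ← integral_add hui ((hvi r).const_mul L)]
  simp only [sub_add_cancel]

lemma tendsto_integral_pow_poissonMeasure_div_pow (m : ℕ) :
    Tendsto (fun r : ℝ≥0 => (∫ n, (n : ℝ) ^ m ∂poissonMeasure r) / (r : ℝ) ^ m) atTop (𝓝 1) := by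
  have hdesc := isEquivalent_descFactorial m
  have hdescO : (fun n : ℕ => (n.descFactorial m : ℝ))
      =O[atTop] fun n : ℕ => (n : ℝ) ^ (m : ℝ) := by
    simpa only [Real.rpow_natCast] using hdesc.isBigO
  have hmoment (r : ℝ≥0) : ∫ n, (n.descFactorial m : ℝ) ∂poissonMeasure r = (r : ℝ) ^ m := by
    simpa using integral_poissonMeasure_descFactorial_mul r m 1
  simp only [← Real.rpow_natCast _ m]
  refine tendsto_integral_poissonMeasure_div_rpow_of_dominant (v := fun n => n.descFactorial m)
    (fun n => by positivity) hdescO ?_ ?_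
  · refine tendsto_const_nhds.congr' ?_
    filter_upwards [eventually_gt_atTop 0] with r hr
    rw [hmoment, Real.rpow_natCast, div_self (pow_ne_zero m (NNReal.coe_ne_zero.2 hr.ne'))]
  · simpa only [one_mul, Real.rpow_natCast, Pi.sub_def] using hdesc.symm.isLittleO

lemma tendsto_integral_sq_sub_one_poissonMeasure (m : ℕ) :
    Tendsto (fun r : ℝ≥0 => ∫ n, ((n : ℝ) ^ m / (r : ℝ) ^ m - 1) ^ 2 ∂poissonMeasure r)
      atTop (𝓝 0) := by
  have hlim := ((tendsto_integral_pow_poissonMeasure_div_pow (2 * m)).sub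
    ((tendsto_integral_pow_poissonMeasure_div_pow m).const_mul 2)).add_const 1
  rw [show (1 - 2 * 1 + 1 : ℝ) = 0 by norm_num] at hlim
  refine hlim.congr fun r => ?_
  have hint (k : ℕ) := integrable_pow_poissonMeasure r k
  have hexpand (n : ℕ) : ((n : ℝ) ^ m / (r : ℝ) ^ m - 1) ^ 2
      = (n : ℝ) ^ (2 * m) / (r : ℝ) ^ (2 * m) - 2 * ((n : ℝ) ^ m / (r : ℝ) ^ m) + 1 := by
    rw [pow_mul', pow_mul']
    ring
  simp only [hexpand]
  rw [integral_add (by fun_prop) (by fun_prop), integral_sub (by fun_prop) (by fun_prop),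
    integral_div, integral_const_mul, integral_div]
  simp

lemma abs_rpow_sub_one_le_abs_pow_sub_one {x : ℝ} {m : ℕ} (hx : 0 ≤ x) (hp : 0 ≤ p)
    (hm : p ≤ m) : |x ^ p - 1| ≤ |x ^ m - 1| := by
  rw [← Real.rpow_natCast x m]
  rcases le_total x 1 with hx1 | hx1
  · rw [abs_sub_comm, abs_sub_comm (x ^ (m : ℝ)),
      abs_of_nonneg (sub_nonneg.2 (Real.rpow_le_one hx hx1 hp)),
      abs_of_nonneg (sub_nonneg.2 (Real.rpow_le_one hx hx1 (hp.trans hm)))]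
    linarith [Real.rpow_le_rpow_of_exponent_ge' hx hx1 hp hm]
  · rw [abs_of_nonneg (sub_nonneg.2 (Real.one_le_rpow hx1 hp)),
      abs_of_nonneg (sub_nonneg.2 (Real.one_le_rpow hx1 (hp.trans hm)))]
    linarith [Real.rpow_le_rpow_of_exponent_le hx1 hm]

lemma tendsto_integral_rpow_poissonMeasure_div_rpow (hp : 0 ≤ p) :
    Tendsto (fun r : ℝ≥0 => (∫ n, (n : ℝ) ^ p ∂poissonMeasure r) / (r : ℝ) ^ p) atTop (𝓝 1) := by
  obtain ⟨m, hm⟩ := exists_nat_ge p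
  have hsqrt := (tendsto_integral_sq_sub_one_poissonMeasure m).sqrt
  rw [Real.sqrt_zero] at hsqrt
  rw [tendsto_iff_norm_sub_tendsto_zero]
  refine squeeze_zero' (.of_forall fun _ => norm_nonneg _) ?_ hsqrt
  filter_upwards [eventually_gt_atTop 0] with r hr
  have hr' : (0 : ℝ) < r := hr
  set X : ℕ → ℝ := fun n => n / r
  have hnear (n : ℕ) : ‖X n ^ p - 1‖ ≤ ‖X n ^ m - 1‖ :=
    abs_rpow_sub_one_le_abs_pow_sub_one (by positivity) hp hm
  have hY : MemLp (fun n => ‖X n ^ m - 1‖) 2 (poissonMeasure r) := by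
    simpa only [X, div_eq_mul_inv, mul_pow, inv_pow, Pi.sub_apply] using
      (((memLp_two_pow_poissonMeasure r m).mul_const ((r : ℝ) ^ m)⁻¹).sub (memLp_const 1)).norm
  calc ‖(∫ n, (n : ℝ) ^ p ∂poissonMeasure r) / (r : ℝ) ^ p - 1‖
    _ = ‖∫ n, (X n ^ p - 1) ∂poissonMeasure r‖ := by
      have hint : Integrable (fun n => X n ^ p) (poissonMeasure r) := by
        simpa only [X, Real.div_rpow (Nat.cast_nonneg _) hr'.le] using
          (integrable_poissonMeasure_of_isBigO_rpow (isBigO_refl _ _) r).div_const _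
      rw [integral_sub hint (integrable_const 1)]
      simp [X, Real.div_rpow (Nat.cast_nonneg _) hr'.le, integral_div]
    _ ≤ ∫ n, ‖X n ^ m - 1‖ ∂poissonMeasure r :=
      norm_integral_le_of_norm_le (hY.integrable one_le_two) (.of_forall hnear)
    _ ≤ √(∫ n, ((n : ℝ) ^ m / (r : ℝ) ^ m - 1) ^ 2 ∂poissonMeasure r) := by
      refine Real.le_sqrt_of_sq_le ?_
      have := variance_nonneg (fun n => ‖X n ^ m - 1‖) (poissonMeasure r)
      rw [variance_eq_sub hY] at this
      simpa [X, div_pow] using this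

theorem tendsto_integral_poissonMeasure_div_rpow_of_nonneg (hp : 0 ≤ p)
    (hu : Tendsto (fun n : ℕ => u n / (n : ℝ) ^ p) atTop (𝓝 L)) :
    Tendsto (fun r : ℝ≥0 => (∫ n, u n ∂poissonMeasure r) / (r : ℝ) ^ p) atTop (𝓝 L) := by
  refine tendsto_integral_poissonMeasure_div_rpow_of_dominant (v := fun n => (n : ℝ) ^ p)
    (fun n => by positivity) (isBigO_refl _ _) (tendsto_integral_rpow_poissonMeasure_div_rpow hp) ?_
  refine (isLittleO_iff_tendsto' ?_).2 ?_
  · filter_upwards [eventually_gt_atTop 0] with n hn h0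
    exact absurd h0 (by positivity)
  · refine (tendsto_sub_nhds_zero_iff.2 hu).congr' ?_
    filter_upwards [eventually_gt_atTop 0] with n hn
    field_simp

lemma tendsto_descFactorial_mul_sub_div_rpow (k : ℕ)
    (hu : Tendsto (fun n : ℕ => u n / (n : ℝ) ^ p) atTop (𝓝 L)) :
    Tendsto (fun n : ℕ => n.descFactorial k * u (n - k) / (n : ℝ) ^ (p + k)) atTop (𝓝 L) := by
  have hratio : Tendsto (fun n : ℕ => ((n - k : ℕ) / n : ℝ)) atTop (𝓝 1) := by
    have h := (tendsto_const_div_atTop_nhds_zero_nat (k : ℝ)).const_sub 1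
    rw [sub_zero] at h
    refine h.congr' ?_
    filter_upwards [eventually_gt_atTop k] with n hn
    rw [Nat.cast_sub hn.le, sub_div, div_self (Nat.cast_ne_zero.2 (by lia))]
  have hdesc : Tendsto (fun n : ℕ => (n.descFactorial k : ℝ) / n ^ k) atTop (𝓝 1) := by
    refine (isEquivalent_iff_tendsto_one ?_).1 (isEquivalent_descFactorial k)
    filter_upwards [eventually_gt_atTop 0] with n hn
    positivity
  have h := hdesc.mul ((hu.comp (tendsto_sub_atTop_nat k)).mul
    (hratio.rpow_const (p := p) (.inl one_ne_zero)))
  rw [Real.one_rpow, mul_one, one_mul] at h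
  refine h.congr' ?_
  filter_upwards [eventually_gt_atTop k] with n hn
  have hn0 : (0 : ℝ) < n := by exact_mod_cast (Nat.zero_le k).trans_lt hn
  have hnk : (0 : ℝ) < (n - k : ℕ) := by exact_mod_cast Nat.sub_pos_of_lt hn
  rw [Function.comp_apply, Real.div_rpow hnk.le hn0.le, Real.rpow_add hn0, Real.rpow_natCast]
  field_simp

theorem tendsto_integral_poissonMeasure_div_rpow
    (hu : Tendsto (fun n : ℕ => u n / (n : ℝ) ^ p) atTop (𝓝 L)) :
    Tendsto (fun r : ℝ≥0 => (∫ n, u n ∂poissonMeasure r) / (r : ℝ) ^ p) atTop (𝓝 L) := by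
  obtain ⟨k, hk⟩ := exists_nat_ge (-p)
  -- Replacing `u n` by `n (n - 1) ⋯ (n - k + 1) * u (n - k)` multiplies the expectation by `r ^ k`.
  refine (tendsto_integral_poissonMeasure_div_rpow_of_nonneg (by linarith)
    (tendsto_descFactorial_mul_sub_div_rpow k hu)).congr' ?_
  filter_upwards [eventually_gt_atTop 0] with r hr
  have hr' : (0 : ℝ) < r := hr
  rw [integral_poissonMeasure_descFactorial_mul, Real.rpow_add hr', Real.rpow_natCast]
  field_simp

theorem integral_poissonMeasure_eq_tsum_fwdDiff {r : ℝ≥0}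
    (hu : Integrable u (poissonMeasure r)) :
    ∫ n, u n ∂poissonMeasure r = ∑' n, (fwdDiff 1)^[n] u 0 * (r ^ n / n !) := by
  have hexp : Summable fun n : ℕ => ‖(-r : ℝ) ^ n / (n ! : ℝ)‖ :=
    (Real.summable_pow_div_factorial _).norm
  have hur : Summable fun n : ℕ => ‖u n * (r ^ n / n ! : ℝ)‖ := by
    refine ((integrable_poissonMeasure_iff.1 hu).mul_left (Real.exp r)).congr fun n => ?_
    rw [norm_mul, Real.norm_of_nonneg (by positivity : 0 ≤ (r ^ n / n ! : ℝ)), Real.exp_neg]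
    field_simp
  have hcauchy := tsum_mul_tsum_eq_tsum_sum_range_of_summable_norm hur hexp
  calc ∫ n, u n ∂poissonMeasure r
    _ = (∑' n, u n * (r ^ n / n !)) * ∑' n : ℕ, (-r : ℝ) ^ n / n ! := by
      rw [(NormedSpace.expSeries_div_hasSum_exp (-r : ℝ)).tsum_eq, ← Real.exp_eq_exp_ℝ,
        integral_poissonMeasure, ← tsum_mul_right]
      refine tsum_congr fun n => ?_
      rw [smul_eq_mul]
      ring
    _ = _ := by
      rw [hcauchy]
      refine tsum_congr fun n => ?_
      rw [fwdDiff_iter_eq_sum_shift, Finset.sum_mul]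
      refine Finset.sum_congr rfl fun k hk => ?_
      have hkn : k ≤ n := Nat.lt_succ_iff.1 (Finset.mem_range.1 hk)
      have hpow : (r : ℝ) ^ n = r ^ (n - k) * r ^ k := by rw [← pow_add, Nat.sub_add_cancel hkn]
      rw [zsmul_eq_mul, zero_add, smul_eq_mul, mul_one, neg_pow, hpow]
      push_cast [Nat.cast_choose ℝ hkn]
      field_simp

end PoissonAsymptotics

section KummerFunction

variable {a b : ℝ}

lemma hasDerivAt_tsum_mul_pow_div_factorial {u : ℕ → ℝ}
    (hu : ∀ x : ℝ, Summable fun n => u (n + 1) * (x ^ n / n !)) (z : ℝ) :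
    HasDerivAt (fun x => ∑' n, u n * (x ^ n / n !)) (∑' n, u (n + 1) * (z ^ n / n !)) z := by
  set R := |z| + 1 with hR
  have hshift (x : ℝ) (n : ℕ) :
      u (n + 1) * (x ^ n / n !) = u (n + 1) * ((n + 1 : ℕ) * x ^ n / (n + 1)!) := by
    rw [Nat.factorial_succ]
    push_cast
    field_simp
  have hsum (x : ℝ) : Summable fun n : ℕ => u n * (n * x ^ (n - 1) / n !) :=
    (summable_nat_add_iff 1).1 ((hu x).congr (hshift x))
  have hderiv := hasDerivAt_tsum_of_isPreconnected (t := Metric.ball 0 R) (y₀ := 0) (y := z)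
    (g := fun n x => u n * (x ^ n / n !)) (g' := fun n x => u n * (n * x ^ (n - 1) / n !))
    (hsum R).norm Metric.isOpen_ball (convex_ball 0 R).isPreconnected
    (fun n x _ => ((hasDerivAt_pow n x).div_const _).const_mul _)
    (fun n x hx => ?_) (Metric.mem_ball_self (by positivity))
    (summable_of_ne_finset_zero (s := {0}) fun n hn => by
      simp [show n ≠ 0 by simpa using hn])
    (by simp [hR])
  · rw [(hsum z).tsum_eq_zero_add, Nat.cast_zero, zero_mul, zero_div, mul_zero, zero_add] at hderiv
    simpa only [Nat.add_sub_cancel, ← hshift z] using hderiv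
  · have hxR : ‖x‖ ≤ ‖R‖ := by
      rw [Real.norm_of_nonneg (by positivity : 0 ≤ R)]
      exact (mem_ball_zero_iff.1 hx).le
    simp only [norm_mul, norm_div, norm_pow]
    gcongr

lemma poch_zero (a : ℝ) : poch a 0 = 1 := Finset.prod_range_zero _

lemma poch_succ (a : ℝ) (n : ℕ) : poch a (n + 1) = poch a n * (a + n) :=
  Finset.prod_range_succ _ _

lemma poch_succ_left (a : ℝ) (n : ℕ) : poch a (n + 1) = a * poch (a + 1) n := by
  simp only [poch, Finset.prod_range_succ', Nat.cast_zero, add_zero, Nat.cast_succ]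
  rw [mul_comm]
  simp only [add_assoc, add_comm (1 : ℝ)]

lemma poch_ne_zero (hb : ∀ n : ℕ, b ≠ -n) (n : ℕ) : poch b n ≠ 0 :=
  Finset.prod_ne_zero_iff.2 fun i _ h => hb i (eq_neg_of_add_eq_zero_left h)

lemma add_one_ne_neg_natCast (hb : ∀ n : ℕ, b ≠ -n) (n : ℕ) : b + 1 ≠ -n := fun h =>
  hb (n + 1) (by push_cast; linarith)

lemma tendsto_poch_div_rpow_mul_factorial (s : ℝ) :
    Tendsto (fun n : ℕ => poch s n / ((n : ℝ) ^ (s - 1) * n !)) atTop (𝓝 (Real.Gamma s)⁻¹) := by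
  by_cases hs : ∃ m : ℕ, s = -m
  · obtain ⟨m, rfl⟩ := hs
    rw [(Real.Gamma_eq_zero_iff _).2 ⟨m, rfl⟩, inv_zero]
    refine tendsto_const_nhds.congr' ?_
    filter_upwards [eventually_gt_atTop m] with n hn
    rw [poch, Finset.prod_eq_zero (Finset.mem_range.2 hn) (neg_add_cancel _), zero_div]
  · have hshift : Tendsto (fun n : ℕ => (n : ℝ) / (n + s)) atTop (𝓝 1) :=
      tendsto_natCast_div_add_atTop s
    have hlim := ((Real.GammaSeq_tendsto_Gamma s).inv₀
      (Real.Gamma_ne_zero (by simpa using hs))).mul hshift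
    rw [mul_one] at hlim
    refine hlim.congr' ?_
    filter_upwards [eventually_gt_atTop 0] with n hn
    have hn0 : (0 : ℝ) < n := Nat.cast_pos.2 hn
    have hns : s + n ≠ 0 := fun h => hs ⟨n, eq_neg_of_add_eq_zero_left h⟩
    rw [Real.GammaSeq, ← poch, poch_succ, Real.rpow_sub_one hn0.ne', add_comm (n : ℝ)]
    field_simp

/-- The coefficient `(a)ₙ / (b)ₙ` of `z ^ n / n!` in `M(a, b, z)`: keeping `n!` apart makes the
Kummer series an exponential generating function. -/
noncomputable def kummerCoeff (a b : ℝ) (n : ℕ) : ℝ := poch a n / poch b n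

lemma kummerM_eq_tsum (a b z : ℝ) : kummerM a b z = ∑' n, kummerCoeff a b n * (z ^ n / n !) :=
  tsum_congr fun n => by rw [kummerCoeff]; ring

lemma kummerM_zero (a b : ℝ) : kummerM a b 0 = 1 := by
  rw [kummerM, tsum_eq_single 0 fun n hn => by simp [hn]]
  simp [poch_zero]

lemma kummerCoeff_succ (a b : ℝ) (n : ℕ) :
    kummerCoeff a b (n + 1) = a / b * kummerCoeff (a + 1) (b + 1) n := by
  rw [kummerCoeff, kummerCoeff, poch_succ_left, poch_succ_left, mul_div_mul_comm]

lemma tendsto_kummerCoeff_div_rpow (a : ℝ) (hb : ∀ n : ℕ, b ≠ -n) :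
    Tendsto (fun n : ℕ => kummerCoeff a b n / (n : ℝ) ^ (a - b)) atTop
      (𝓝 (Real.Gamma b / Real.Gamma a)) := by
  have hlim := (tendsto_poch_div_rpow_mul_factorial a).div (tendsto_poch_div_rpow_mul_factorial b)
    (inv_ne_zero (Real.Gamma_ne_zero hb))
  rw [inv_div_inv] at hlim
  refine hlim.congr' ?_
  filter_upwards [eventually_gt_atTop 0] with n hn
  have hn0 : (0 : ℝ) < n := Nat.cast_pos.2 hn
  have := poch_ne_zero hb n
  simp only [Pi.div_apply]
  rw [kummerCoeff, show a - b = (a - 1) - (b - 1) by ring, Real.rpow_sub hn0 (a - 1)]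
  field_simp

lemma kummerCoeff_isBigO (a : ℝ) (hb : ∀ n : ℕ, b ≠ -n) :
    kummerCoeff a b =O[atTop] fun n : ℕ => (n : ℝ) ^ (a - b) := by
  refine isBigO_of_div_tendsto_nhds ?_ _ (tendsto_kummerCoeff_div_rpow a hb)
  filter_upwards [eventually_gt_atTop 0] with n hn h0
  exact absurd h0 (by positivity)

lemma summable_kummerCoeff (a : ℝ) (hb : ∀ n : ℕ, b ≠ -n) (z : ℝ) :
    Summable fun n => kummerCoeff a b n * (z ^ n / n !) :=
  summable_mul_pow_div_factorial_of_isBigO_rpow (kummerCoeff_isBigO a hb) z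

theorem hasDerivAt_kummerM (a : ℝ) (hb : ∀ n : ℕ, b ≠ -n) (z : ℝ) :
    HasDerivAt (kummerM a b) (a / b * kummerM (a + 1) (b + 1) z) z := by
  have hsum (x : ℝ) : Summable fun n => kummerCoeff a b (n + 1) * (x ^ n / n !) := by
    simpa only [kummerCoeff_succ, mul_assoc] using
      (summable_kummerCoeff (a + 1) (add_one_ne_neg_natCast hb) x).mul_left (a / b)
  have hderiv := hasDerivAt_tsum_mul_pow_div_factorial hsum z
  simpa only [kummerCoeff_succ, mul_assoc, tsum_mul_left, ← kummerM_eq_tsum] using hderiv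

theorem kummerM_add_one_sub (a : ℝ) (hb : ∀ n : ℕ, b ≠ -n) (z : ℝ) :
    kummerM (a + 1) b z - kummerM a b z = z / b * kummerM (a + 1) (b + 1) z := by
  have hdiff := (summable_kummerCoeff (a + 1) hb z).sub (summable_kummerCoeff a hb z)
  rw [kummerM_eq_tsum, kummerM_eq_tsum, kummerM_eq_tsum,
    ← (summable_kummerCoeff (a + 1) hb z).tsum_sub (summable_kummerCoeff a hb z),
    hdiff.tsum_eq_zero_add, ← tsum_mul_left]
  have hzero : kummerCoeff (a + 1) b 0 - kummerCoeff a b 0 = 0 := by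
    simp only [kummerCoeff, poch_zero, sub_self]
  have hsucc (n : ℕ) : kummerCoeff (a + 1) b (n + 1) - kummerCoeff a b (n + 1)
      = (n + 1) / b * kummerCoeff (a + 1) (b + 1) n := by
    rw [kummerCoeff_succ a, kummerCoeff, kummerCoeff, poch_succ, poch_succ_left b]
    ring
  rw [← sub_mul, hzero, zero_mul, zero_add]
  refine tsum_congr fun n => ?_
  rw [← sub_mul, hsucc, Nat.factorial_succ, pow_succ]
  push_cast
  field_simp

theorem mul_kummerM_eq_add (a : ℝ) (hb : ∀ n : ℕ, b ≠ -n) (z : ℝ) :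
    b * kummerM a b z = (b - a) * kummerM a (b + 1) z + a * kummerM (a + 1) (b + 1) z := by
  have hb' := add_one_ne_neg_natCast hb
  simp only [kummerM_eq_tsum, ← tsum_mul_left]
  rw [← ((summable_kummerCoeff a hb' z).mul_left _).tsum_add
    ((summable_kummerCoeff (a + 1) hb' z).mul_left _)]
  refine tsum_congr fun n => ?_
  have hcoeff : b * kummerCoeff a b n
      = (b - a) * kummerCoeff a (b + 1) n + a * kummerCoeff (a + 1) (b + 1) n := by
    have ha1 : a * poch (a + 1) n = poch a n * (a + n) := by rw [← poch_succ_left, poch_succ]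
    have hb1 : b * poch (b + 1) n = poch b n * (b + n) := by rw [← poch_succ_left, poch_succ]
    have := poch_ne_zero hb n
    have := poch_ne_zero hb' n
    rw [kummerCoeff, kummerCoeff, kummerCoeff]
    field_simp
    linear_combination poch a n * hb1 - poch b n * ha1
  linear_combination (z ^ n / n !) * hcoeff

lemma fwdDiff_kummerCoeff (a : ℝ) (hb : ∀ n : ℕ, b ≠ -n) :
    fwdDiff 1 (kummerCoeff a b) = ((a - b) / b) • kummerCoeff a (b + 1) := by
  ext n
  have hb0 : b ≠ 0 := by simpa using hb 0
  have hbn : b + n ≠ 0 := fun h => hb n (eq_neg_of_add_eq_zero_left h)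
  have hb1 : b * poch (b + 1) n = poch b n * (b + n) := by rw [← poch_succ_left, poch_succ]
  have hpoch : poch (b + 1) n = poch b n * (b + n) / b := by rw [← hb1]; field_simp
  have := poch_ne_zero hb n
  simp only [fwdDiff, kummerCoeff, poch_succ, Pi.smul_apply, smul_eq_mul, hpoch]
  field_simp
  ring

lemma fwdDiff_iter_kummerCoeff_zero (a : ℝ) (hb : ∀ n : ℕ, b ≠ -n) (n : ℕ) :
    (fwdDiff 1)^[n] (kummerCoeff a b) 0 = (-1) ^ n * kummerCoeff (b - a) b n := by
  induction n generalizing b with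
  | zero => simp only [Function.iterate_zero, id, kummerCoeff, poch_zero, pow_zero, one_mul]
  | succ n ih =>
    rw [Function.iterate_succ_apply, fwdDiff_kummerCoeff a hb, fwdDiff_iter_const_smul,
      Pi.smul_apply, ih (add_one_ne_neg_natCast hb), kummerCoeff_succ, smul_eq_mul,
      show b + 1 - a = b - a + 1 by ring]
    ring

/-- Kummer's transformation `M(a, b, -r) = e⁻ʳ M(b - a, b, r)`, with the right-hand side read as a
Poisson expectation. -/
theorem kummerM_neg_eq_integral_poissonMeasure (a : ℝ) (hb : ∀ n : ℕ, b ≠ -n) (r : ℝ≥0) :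
    kummerM a b (-r) = ∫ n, kummerCoeff (b - a) b n ∂poissonMeasure r := by
  rw [integral_poissonMeasure_eq_tsum_fwdDiff
    (integrable_poissonMeasure_of_isBigO_rpow (kummerCoeff_isBigO _ hb) r), kummerM_eq_tsum]
  refine tsum_congr fun n => ?_
  rw [fwdDiff_iter_kummerCoeff_zero _ hb, sub_sub_cancel, neg_pow]
  ring

theorem tendsto_kummerM_neg_div_rpow (a : ℝ) (hb : ∀ n : ℕ, b ≠ -n) :
    Tendsto (fun x => kummerM a b (-x) / x ^ (-a)) atTop
      (𝓝 (Real.Gamma b / Real.Gamma (b - a))) := by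
  have hcoeff := tendsto_kummerCoeff_div_rpow (b - a) hb
  rw [sub_sub_cancel_left] at hcoeff
  refine ((tendsto_integral_poissonMeasure_div_rpow hcoeff).comp
    tendsto_real_toNNReal_atTop).congr' ?_
  filter_upwards [eventually_ge_atTop 0] with x hx
  rw [Function.comp_apply, ← kummerM_neg_eq_integral_poissonMeasure a hb, Real.coe_toNNReal x hx]

end KummerFunction

section KummerProfile

lemma half_ne_neg_natCast (n : ℕ) : (1 / 2 : ℝ) ≠ -n := by
  have : (0 : ℝ) ≤ n := n.cast_nonneg
  linarith

/-- The similarity profile with value `1` and slope `0` at the origin, i.e. the even solution of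
`f'' + 2 η f' = 2 α f`. -/
noncomputable def kummerEven (α η : ℝ) : ℝ := kummerM (-α / 2) (1 / 2) (-η ^ 2)

/-- The similarity profile with value `0` and slope `1` at the origin, i.e. the odd solution of
`f'' + 2 η f' = 2 α f`. -/
noncomputable def kummerOdd (α η : ℝ) : ℝ := η * kummerM (-α / 2 + 1 / 2) (3 / 2) (-η ^ 2)

/-- The similarity profile with Cauchy data `(E, F)` at the origin; `t ^ (α / 2)` times this profile
at `η = x / (2 √(d t))` is the temperature `Ψ_s`. -/
noncomputable def kummerProfile (α E F η : ℝ) : ℝ := E * kummerEven α η + F * kummerOdd α η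

/-- The coefficient of `η ^ α` in `kummerProfile α E F η` as `η → ∞`. -/
noncomputable def farFieldCoeff (α E F : ℝ) : ℝ :=
  E * (√Real.pi / Real.Gamma ((α + 1) / 2)) + F * (√Real.pi / (2 * Real.Gamma (α / 2 + 1)))

lemma kummerProfile_zero (α E F : ℝ) : kummerProfile α E F 0 = E := by
  simp [kummerProfile, kummerEven, kummerOdd, kummerM_zero]

lemma kummerEven_eq_add (α η : ℝ) :
    kummerEven α η = kummerEven (α - 1 - 1) η + 2 * η * kummerOdd (α - 1) η := by
  have h := kummerM_add_one_sub (-α / 2) half_ne_neg_natCast (-η ^ 2)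
  rw [kummerEven, kummerEven, kummerOdd, show -(α - 1 - 1) / 2 = -α / 2 + 1 by ring,
    show -(α - 1) / 2 + 1 / 2 = -α / 2 + 1 by ring, show (3 / 2 : ℝ) = 1 / 2 + 1 by norm_num]
  linear_combination -h

lemma mul_kummerOdd_eq_add (α η : ℝ) :
    α * kummerOdd α η = (α - 1) * kummerOdd (α - 1 - 1) η + η * kummerEven (α - 1) η := by
  have h := mul_kummerM_eq_add (-α / 2 + 1 / 2) half_ne_neg_natCast (-η ^ 2)
  rw [kummerEven, kummerOdd, kummerOdd, show -(α - 1 - 1) / 2 + 1 / 2 = -α / 2 + 1 / 2 + 1 by ring,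
    show -(α - 1) / 2 = -α / 2 + 1 / 2 by ring, show (3 / 2 : ℝ) = 1 / 2 + 1 by norm_num]
  linear_combination -2 * η * h

lemma hasDerivAt_kummerM_neg_sq (a : ℝ) {b : ℝ} (hb : ∀ n : ℕ, b ≠ -n) (η : ℝ) :
    HasDerivAt (fun η => kummerM a b (-η ^ 2))
      (-(2 * η) * (a / b * kummerM (a + 1) (b + 1) (-η ^ 2))) η := by
  have hsq : HasDerivAt (fun η : ℝ => -η ^ 2) (-(2 * η)) η := by
    simpa using (hasDerivAt_pow 2 η).fun_neg
  exact ((hasDerivAt_kummerM a hb (-η ^ 2)).comp η hsq).congr_deriv (mul_comm _ _)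

lemma hasDerivAt_kummerEven (α η : ℝ) :
    HasDerivAt (kummerEven α) (2 * α * kummerOdd (α - 1) η) η := by
  refine (hasDerivAt_kummerM_neg_sq (-α / 2) half_ne_neg_natCast η).congr_deriv ?_
  rw [kummerOdd, show -(α - 1) / 2 + 1 / 2 = -α / 2 + 1 by ring,
    show (3 / 2 : ℝ) = 1 / 2 + 1 by norm_num]
  ring

lemma hasDerivAt_kummerOdd (α η : ℝ) : HasDerivAt (kummerOdd α) (kummerEven (α - 1) η) η := by
  have hb : ∀ n : ℕ, (1 / 2 + 1 : ℝ) ≠ -n := add_one_ne_neg_natCast half_ne_neg_natCast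
  have hcontig := mul_kummerM_eq_add (-α / 2 + 1 / 2) half_ne_neg_natCast (-η ^ 2)
  have hshift := kummerM_add_one_sub (-α / 2 + 1 / 2) hb (-η ^ 2)
  have hderiv := (hasDerivAt_id η).mul (hasDerivAt_kummerM_neg_sq (-α / 2 + 1 / 2) hb η)
  unfold kummerOdd
  rw [kummerEven, show -(α - 1) / 2 = -α / 2 + 1 / 2 by ring,
    show (3 / 2 : ℝ) = 1 / 2 + 1 by norm_num]
  refine hderiv.congr_deriv ?_
  simp only [id]
  linear_combination -2 * hcontig - 2 * (-α / 2 + 1 / 2) * hshift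

theorem hasDerivAt_kummerProfile (α E F η : ℝ) :
    HasDerivAt (kummerProfile α E F) (kummerProfile (α - 1) F (2 * α * E) η) η := by
  refine (((hasDerivAt_kummerEven α η).const_mul E).add
    ((hasDerivAt_kummerOdd α η).const_mul F)).congr_deriv ?_
  rw [kummerProfile]
  ring

theorem hasDerivAt_deriv_kummerProfile (α E F η : ℝ) :
    HasDerivAt (kummerProfile (α - 1) F (2 * α * E))
      (2 * α * kummerProfile α E F η - 2 * η * kummerProfile (α - 1) F (2 * α * E) η) η := by
  refine (hasDerivAt_kummerProfile (α - 1) F (2 * α * E) η).congr_deriv ?_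
  simp only [kummerProfile]
  linear_combination -(2 * α * E) * kummerEven_eq_add α η - 2 * F * mul_kummerOdd_eq_add α η

lemma tendsto_kummerM_neg_sq_div_rpow (a : ℝ) {b : ℝ} (hb : ∀ n : ℕ, b ≠ -n) :
    Tendsto (fun η => kummerM a b (-η ^ 2) / η ^ (-2 * a)) atTop
      (𝓝 (Real.Gamma b / Real.Gamma (b - a))) := by
  refine ((tendsto_kummerM_neg_div_rpow a hb).comp (tendsto_pow_atTop two_ne_zero)).congr' ?_
  filter_upwards [eventually_ge_atTop 0] with η hη
  rw [Function.comp_apply, ← Real.rpow_natCast_mul hη]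
  norm_num

theorem tendsto_kummerProfile_div_rpow (α E F : ℝ) :
    Tendsto (fun η => kummerProfile α E F η / η ^ α) atTop (𝓝 (farFieldCoeff α E F)) := by
  have heven := tendsto_kummerM_neg_sq_div_rpow (-α / 2) half_ne_neg_natCast
  have hodd := tendsto_kummerM_neg_sq_div_rpow (-α / 2 + 1 / 2)
    (add_one_ne_neg_natCast half_ne_neg_natCast)
  rw [Real.Gamma_one_half_eq, show 1 / 2 - -α / 2 = (α + 1) / 2 by ring] at heven
  rw [Real.Gamma_add_one (by norm_num), Real.Gamma_one_half_eq,
    show 1 / 2 + 1 - (-α / 2 + 1 / 2) = α / 2 + 1 by ring] at hodd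
  have hlim := (heven.const_mul E).add (hodd.const_mul F)
  rw [show 1 / 2 * √Real.pi / Real.Gamma (α / 2 + 1) = √Real.pi / (2 * Real.Gamma (α / 2 + 1)) by
    ring, ← farFieldCoeff] at hlim
  refine hlim.congr' ?_
  filter_upwards [eventually_gt_atTop 0] with η hη
  rw [kummerProfile, kummerEven, kummerOdd, show -2 * (-α / 2) = α by ring,
    show -2 * (-α / 2 + 1 / 2) = α - 1 by ring, Real.rpow_sub_one hη.ne',
    show (3 / 2 : ℝ) = 1 / 2 + 1 by norm_num]
  field_simp

end KummerProfile

section SelfSimilar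

/-- The function `t ^ (α / 2) f(η)` of the similarity variable `η = x / (2 √(d t))` of the heat
equation with diffusivity `d`. -/
noncomputable def selfSimilar (d α : ℝ) (f : ℝ → ℝ) (x t : ℝ) : ℝ :=
  t ^ (α / 2) * f (x / (2 * √(d * t)))

variable {d α x t : ℝ} {f f' : ℝ → ℝ}

lemma selfSimilar_zero (d α : ℝ) (f : ℝ → ℝ) (t : ℝ) :
    selfSimilar d α f 0 t = t ^ (α / 2) * f 0 := by
  rw [selfSimilar, zero_div]

lemma hasDerivAt_selfSimilar_space (hd : 0 ≤ d) (ht : 0 < t)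
    (hf : ∀ η, HasDerivAt f (f' η) η) (x : ℝ) :
    HasDerivAt (fun y => selfSimilar d α f y t) (selfSimilar d (α - 1) f' x t / (2 * √d)) x := by
  refine (((hf _).comp x ((hasDerivAt_id x).div_const (2 * √(d * t)))).const_mul
    (t ^ (α / 2))).congr_deriv ?_
  rw [selfSimilar, show (α - 1) / 2 = α / 2 - 1 / 2 by ring, Real.rpow_sub ht, ← Real.sqrt_eq_rpow,
    id, Real.sqrt_mul hd]
  ring

lemma hasDerivAt_selfSimilar_time (hd : 0 < d) (ht : 0 < t)
    (hf : ∀ η, HasDerivAt f (f' η) η) (x : ℝ) :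
    HasDerivAt (fun τ => selfSimilar d α f x τ)
      (selfSimilar d (α - 1 - 1) (fun η => 2 * α * f η - 2 * η * f' η) x t / 4) t := by
  have hdt : 0 < d * t := mul_pos hd ht
  have hsqrt : HasDerivAt (fun τ => 2 * √(d * τ)) (d / √(d * t)) t := by
    refine ((((hasDerivAt_id t).const_mul d).sqrt hdt.ne').const_mul 2).congr_deriv ?_
    simp only [id]
    field_simp
  have hη : HasDerivAt (fun τ => x / (2 * √(d * τ))) (-(x / (2 * √(d * t))) / (2 * t)) t := by
    refine ((hasDerivAt_const t x).div hsqrt (by positivity)).congr_deriv ?_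
    field_simp
    rw [Real.sq_sqrt hdt.le]
    ring
  refine ((Real.hasDerivAt_rpow_const (p := α / 2) (.inl ht.ne')).mul
    ((hf _).comp t hη)).congr_deriv ?_
  rw [selfSimilar, show (α - 1 - 1) / 2 = α / 2 - 1 by ring, Function.comp_apply,
    Real.rpow_sub_one ht.ne']
  field_simp
  ring

theorem deriv_selfSimilar_time_eq (hd : 0 < d) (ht : 0 < t)
    (hf : ∀ η, HasDerivAt f (f' η) η)
    (hf' : ∀ η, HasDerivAt f' (2 * α * f η - 2 * η * f' η) η) (x : ℝ) :
    deriv (fun τ => selfSimilar d α f x τ) t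
      = d * deriv (deriv fun y => selfSimilar d α f y t) x := by
  have hspace : (deriv fun y => selfSimilar d α f y t)
      = fun y => selfSimilar d (α - 1) f' y t / (2 * √d) :=
    funext fun y => (hasDerivAt_selfSimilar_space hd.le ht hf y).deriv
  rw [hspace, ((hasDerivAt_selfSimilar_space hd.le ht hf' x).div_const _).deriv,
    (hasDerivAt_selfSimilar_time hd ht hf x).deriv]
  field_simp
  rw [Real.sq_sqrt hd.le]
  ring

theorem tendsto_selfSimilar_nhdsGT_zero {ℓ : ℝ} (hd : 0 < d) (hx : 0 < x)
    (hf : Tendsto (fun η => f η / η ^ α) atTop (𝓝 ℓ)) :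
    Tendsto (fun t => selfSimilar d α f x t) (𝓝[>] 0) (𝓝 (ℓ * (x / (2 * √d)) ^ α)) := by
  have hη : Tendsto (fun t => x / (2 * √(d * t))) (𝓝[>] 0) atTop := by
    have hcont : Continuous fun t => 2 * √(d * t) := by fun_prop
    have hzero : Tendsto (fun t => 2 * √(d * t)) (𝓝[>] 0) (𝓝[>] 0) := by
      refine tendsto_nhdsWithin_iff.2 ⟨?_, ?_⟩
      · simpa using (hcont.tendsto 0).mono_left nhdsWithin_le_nhds
      · filter_upwards [self_mem_nhdsWithin] with t ht
        have ht0 : 0 < t := ht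
        exact Set.mem_Ioi.2 (by positivity)
    exact (tendsto_inv_nhdsGT_zero.comp hzero).const_mul_atTop hx
  refine ((hf.comp hη).mul_const _).congr' ?_
  filter_upwards [self_mem_nhdsWithin] with t ht
  have ht0 : 0 < t := ht
  have hscale : (x / (2 * √d)) ^ α = t ^ (α / 2) * (x / (2 * √(d * t))) ^ α := by
    have hsplit : x / (2 * √d) = √t * (x / (2 * √(d * t))) := by
      rw [Real.sqrt_mul hd.le]
      field_simp
    rw [hsplit, Real.mul_rpow (by positivity) (by positivity), Real.sqrt_eq_rpow t,
      ← Real.rpow_mul ht0.le, one_div_mul_eq_div]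
  rw [hscale, selfSimilar, Function.comp_apply]
  field_simp

end SelfSimilar

section SolidPhase

lemma Gamma_add_one_mul_sqrt_pi (α : ℝ) :
    Real.Gamma (α + 1) * √Real.pi
      = 2 ^ α * (Real.Gamma ((α + 1) / 2) * Real.Gamma (α / 2 + 1)) := by
  have hdup := Real.Gamma_mul_Gamma_add_half ((α + 1) / 2)
  rw [show (α + 1) / 2 + 1 / 2 = α / 2 + 1 by ring, show 2 * ((α + 1) / 2) = α + 1 by ring,
    show 1 - (α + 1) = -α by ring, Real.rpow_neg two_pos.le] at hdup
  rw [hdup]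
  field_simp

lemma farFieldCoeff_eq_of_convective {α k d Ti Tinf h E F : ℝ} (hα : ∀ n : ℕ, α + 1 ≠ -n)
    (hk : k ≠ 0) (hd : 0 ≤ d)
    (hE : E * (k * Real.Gamma (α / 2 + 1) + h * √d * Real.Gamma ((α + 1) / 2))
      = -Ti * d ^ (α / 2) * k * Real.Gamma (α + 1) + Real.Gamma ((α + 1) / 2) * h * √d * Tinf)
    (hF : k * F = 2 * √d * h * (E - Tinf)) :
    farFieldCoeff α E F = -Ti * (2 * √d) ^ α := by
  have hdup := Gamma_add_one_mul_sqrt_pi α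
  have hne := mul_ne_zero (Real.Gamma_ne_zero hα) (Real.sqrt_ne_zero'.2 Real.pi_pos)
  rw [hdup] at hne
  have hG₁ := left_ne_zero_of_mul (right_ne_zero_of_mul hne)
  have hG₂ := right_ne_zero_of_mul (right_ne_zero_of_mul hne)
  have hpow : (2 * √d) ^ α = 2 ^ α * d ^ (α / 2) := by
    rw [Real.mul_rpow two_pos.le (Real.sqrt_nonneg d), Real.sqrt_eq_rpow, ← Real.rpow_mul hd,
      one_div_mul_eq_div]
  rw [farFieldCoeff, hpow]
  generalize Real.Gamma (α / 2 + 1) = G₂ at *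
  generalize Real.Gamma ((α + 1) / 2) = G₁ at *
  field_simp
  apply mul_right_cancel₀ hk
  linear_combination 2 * √Real.pi * hE + √Real.pi * G₁ * hF - 2 * Ti * d ^ (α / 2) * k * hdup

lemma mul_deriv_selfSimilar_kummerProfile_zero {α k d Tinf h E F t : ℝ} (hd : 0 < d) (ht : 0 < t)
    (hF : k * F = 2 * √d * h * (E - Tinf)) :
    k * deriv (fun y => selfSimilar d α (kummerProfile α E F) y t) 0
      = h * t ^ (-(1 : ℝ) / 2)
        * (selfSimilar d α (kummerProfile α E F) 0 t - Tinf * t ^ (α / 2)) := by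
  have hpow : t ^ ((α - 1) / 2) = t ^ (-(1 : ℝ) / 2) * t ^ (α / 2) := by
    rw [← Real.rpow_add ht]
    ring_nf
  rw [(hasDerivAt_selfSimilar_space hd.le ht (hasDerivAt_kummerProfile α E F) 0).deriv,
    selfSimilar_zero, selfSimilar_zero, kummerProfile_zero, kummerProfile_zero, hpow]
  field_simp
  linear_combination hF

end SolidPhase

theorem statement_18_general (α ks ds Ti Tinf h₀ : ℝ)
    (hα : ∀ n : ℕ, α + 1 ≠ -n) (hks : ks ≠ 0) (hds : 0 < ds)
    (hden : ks * Real.Gamma (α / 2 + 1) + h₀ * Real.sqrt ds * Real.Gamma ((α + 1) / 2) ≠ 0)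
    (Es Fs : ℝ)
    (hEs : Es = (-Ti * ds ^ (α / 2) * ks * Real.Gamma (α + 1)
        + Real.Gamma ((α + 1) / 2) * h₀ * Real.sqrt ds * Tinf) /
      (ks * Real.Gamma (α / 2 + 1) + h₀ * Real.sqrt ds * Real.Gamma ((α + 1) / 2)))
    (hFs : Fs = 2 * Real.sqrt ds * h₀ * (Es - Tinf) / ks)
    (Ψs : ℝ → ℝ → ℝ)
    (hΨs : ∀ x t : ℝ, Ψs x t =
      t ^ (α / 2) *
        (Es * kummerM (-α / 2) (1 / 2) (-(x / (2 * Real.sqrt (ds * t))) ^ 2)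
          + Fs * (x / (2 * Real.sqrt (ds * t))) *
              kummerM (-α / 2 + 1 / 2) (3 / 2) (-(x / (2 * Real.sqrt (ds * t))) ^ 2))) :
    (∀ x t : ℝ, 0 < t →
        deriv (fun τ => Ψs x τ) t = ds * deriv (deriv (fun y => Ψs y t)) x) ∧
    (∀ t : ℝ, 0 < t →
        ks * deriv (fun y => Ψs y t) 0
          = h₀ * t ^ (-(1:ℝ) / 2) * (Ψs 0 t - Tinf * t ^ (α / 2))) ∧
    (∀ x : ℝ, 0 < x →
        Filter.Tendsto (fun t : ℝ => Ψs x t) (nhdsWithin 0 (Set.Ioi 0))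
          (nhds (-Ti * x ^ α))) := by
  rw [eq_div_iff hden] at hEs
  have hF : ks * Fs = 2 * √ds * h₀ * (Es - Tinf) := by rw [hFs]; field_simp
  have hΨ : Ψs = selfSimilar ds α (kummerProfile α Es Fs) := by
    ext x t
    rw [hΨs, mul_assoc Fs, selfSimilar, kummerProfile, kummerEven, kummerOdd]
  subst hΨ
  refine ⟨fun x t ht => ?_, fun t ht => ?_, fun x hx => ?_⟩
  · exact deriv_selfSimilar_time_eq hds ht (hasDerivAt_kummerProfile α Es Fs)
      (hasDerivAt_deriv_kummerProfile α Es Fs) x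
  · exact mul_deriv_selfSimilar_kummerProfile_zero hds ht hF
  · have hlim := tendsto_selfSimilar_nhdsGT_zero hds hx (tendsto_kummerProfile_div_rpow α Es Fs)
    rwa [farFieldCoeff_eq_of_convective hα hks hds.le hEs hF, mul_assoc,
      ← Real.mul_rpow (by positivity) (by positivity), mul_div_cancel₀ _ (by positivity)] at hlim

/-- when `0 < h₀ ≤ 2^α Γ(α/2+1) k_s T_i d_s^{(α−1)/2}/(T_∞ √π)`, the
problem reduces to a pure heat-conduction problem for the solid phase, whose explicit
solution `Ψ_s` (with the displayed coefficients `E_s, F_s`) satisfies the heat equation,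
the convective condition at `x = 0`, and the initial condition `Ψ_s(x,0) = −T_i x^α`. -/
theorem statement_18 (α ks ds Ti Tinf h₀ : ℝ)
    (hα : 0 < α) (hαnotint : ∀ n : ℤ, α ≠ n)
    (hks : 0 < ks) (hds : 0 < ds) (hTi : 0 < Ti) (hTinf : 0 < Tinf) (hh₀ : 0 < h₀)
    (hcond : h₀ ≤ (2:ℝ) ^ α * Real.Gamma (α / 2 + 1) * ks * Ti * ds ^ ((α - 1) / 2)
      / (Tinf * Real.sqrt Real.pi))
    (Es Fs : ℝ)
    (hEs : Es = (-Ti * ds ^ (α / 2) * ks * Real.Gamma (α + 1)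
        + Real.Gamma ((α + 1) / 2) * h₀ * Real.sqrt ds * Tinf) /
      (ks * Real.Gamma (α / 2 + 1) + h₀ * Real.sqrt ds * Real.Gamma ((α + 1) / 2)))
    (hFs : Fs = 2 * Real.sqrt ds * h₀ * (Es - Tinf) / ks)
    (Ψs : ℝ → ℝ → ℝ)
    (hΨs : ∀ x t : ℝ, Ψs x t =
      t ^ (α / 2) *
        (Es * kummerM (-α / 2) (1 / 2) (-(x / (2 * Real.sqrt (ds * t))) ^ 2)
          + Fs * (x / (2 * Real.sqrt (ds * t))) *
              kummerM (-α / 2 + 1 / 2) (3 / 2) (-(x / (2 * Real.sqrt (ds * t))) ^ 2))) :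
    (∀ x t : ℝ, 0 < x → 0 < t →
        deriv (fun τ => Ψs x τ) t = ds * deriv (deriv (fun y => Ψs y t)) x) ∧
    (∀ t : ℝ, 0 < t →
        ks * deriv (fun y => Ψs y t) 0
          = h₀ * t ^ (-(1:ℝ) / 2) * (Ψs 0 t - Tinf * t ^ (α / 2))) ∧
    (∀ x : ℝ, 0 < x →
        Filter.Tendsto (fun t : ℝ => Ψs x t) (nhdsWithin 0 (Set.Ioi 0))
          (nhds (-Ti * x ^ α))) := by
  have hα' : ∀ n : ℕ, α + 1 ≠ -n := fun n => by linarith [(n.cast_nonneg : (0 : ℝ) ≤ n)]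
  exact (statement_18_general α ks ds Ti Tinf h₀ hα' hks.ne' hds (by positivity)
    Es Fs hEs hFs Ψs hΨs).imp_left fun hheat x t _ => hheat x t
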